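/- Let R be a smooth function on a neighborhood of the origin in ℝ² with R(0,0) = 0 and nonvanishing Taylor series, let M > 0, and set α = α_M(R). Then for every r ∈ ℝ and every ε > 0 there exists δ > 0 such that |R(x,y) − R_M(x,y)| < ε x^α for all (x,y) with 0 < x < δ and (r − δ) x^M < y < (r + δ) x^M. -/

import Mathlib

open MeasureTheory Set Filter Topology

noncomputable section

/-- Iterated partial derivative `∂ₓᵃ ∂ᵧᵇ R` at `(x, y)`. -/
def pderiv2 (R : ℝ → ℝ → ℝ) (a b : ℕ) (x y : ℝ) : ℝ :=
  iteratedDeriv a (fun x' => iteratedDeriv b (fun y' => R x' y') y) x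

/-- Taylor coefficient `R_{ab} = ∂ₓᵃ ∂ᵧᵇ R(0,0) / (a! b!)`. -/
def tcoeff (R : ℝ → ℝ → ℝ) (a b : ℕ) : ℝ :=
  pderiv2 R a b 0 0 / (Nat.factorial a * Nat.factorial b)

/-- The support of the Taylor series of `R` at the origin. -/
def tsupp (R : ℝ → ℝ → ℝ) : Set (ℕ × ℕ) := {p | tcoeff R p.1 p.2 ≠ 0}

/-- The Newton polygon of `R`. -/
def newtonPolygon (R : ℝ → ℝ → ℝ) : Set (ℝ × ℝ) :=
  convexHull ℝ (⋃ p ∈ tsupp R, {q : ℝ × ℝ | (p.1 : ℝ) ≤ q.1 ∧ (p.2 : ℝ) ≤ q.2})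

/-- The Newton distance of `R`. -/
def newtonDist (R : ℝ → ℝ → ℝ) : ℝ := sInf {t : ℝ | (t, t) ∈ newtonPolygon R}

/-- `e` is a compact edge of `N(R)` of slope `-1/M` (with `M > 0`): it is the
(one-dimensional, compact) face of the Newton polygon cut out by a supporting line
`t₁ + M t₂ = c`. -/
def IsCompactEdge (R : ℝ → ℝ → ℝ) (M : ℝ) (e : Set (ℝ × ℝ)) : Prop :=
  0 < M ∧ ∃ c : ℝ, (∀ q ∈ newtonPolygon R, c ≤ q.1 + M * q.2) ∧
    e = {q ∈ newtonPolygon R | q.1 + M * q.2 = c} ∧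
    ∃ v w : ℝ × ℝ, v ≠ w ∧ e = segment ℝ v w

/-- The edge polynomial `R_e(x,y) = Σ_{(a,b) ∈ e ∩ supp R} R_{ab} x^a y^b`. -/
def edgePoly (R : ℝ → ℝ → ℝ) (e : Set (ℝ × ℝ)) (x y : ℝ) : ℝ :=
  ∑' p : ℕ × ℕ,
    Set.indicator {p : ℕ × ℕ | ((p.1 : ℝ), (p.2 : ℝ)) ∈ e}
      (fun p => tcoeff R p.1 p.2 * x ^ p.1 * y ^ p.2) p

/-- `p` has a zero of order exactly `m` at `y₀`. -/
def ZeroOfOrder (p : ℝ → ℝ) (m : ℕ) (y₀ : ℝ) : Prop :=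
  (∀ j < m, iteratedDeriv j p y₀ = 0) ∧ iteratedDeriv m p y₀ ≠ 0

/-- `R` is in nonadapted coordinates: the bisectrix meets the interior of a compact
edge `e` such that `R_e(1, ⬝)` has a real zero of order greater than `d(R)`. -/
def IsNonadapted (R : ℝ → ℝ → ℝ) : Prop :=
  ∃ (M : ℝ) (e : Set (ℝ × ℝ)) (v w : ℝ × ℝ), IsCompactEdge R M e ∧ v ≠ w ∧
    e = segment ℝ v w ∧ (∃ t : ℝ, (t, t) ∈ openSegment ℝ v w) ∧
    ∃ (y₀ : ℝ) (m : ℕ), newtonDist R < (m : ℝ) ∧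
      ZeroOfOrder (fun y => edgePoly R e 1 y) m y₀

/-- `R` is in generic adapted coordinates: adapted coordinates, every compact edge has slope
at least `-1`, and the Newton polygon meets the `t₂`-axis. -/
def GenericAdapted (R : ℝ → ℝ → ℝ) : Prop :=
  ¬ IsNonadapted R ∧ (∀ M e, IsCompactEdge R M e → 1 ≤ M) ∧
    ∃ t : ℝ, ((0 : ℝ), t) ∈ newtonPolygon R

/-- `α_M(R) = min {a + M b : (a,b) ∈ supp R}`. -/
def alphaM (R : ℝ → ℝ → ℝ) (M : ℝ) : ℝ :=
  sInf {t : ℝ | ∃ p ∈ tsupp R, t = (p.1 : ℝ) + M * p.2}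

/-- `R_M`, the sum of the terms of the Taylor series of `R` of minimal `M`-weighted degree. -/
def RMpart (R : ℝ → ℝ → ℝ) (M : ℝ) (x y : ℝ) : ℝ :=
  ∑' p : ℕ × ℕ,
    Set.indicator {p : ℕ × ℕ | p ∈ tsupp R ∧ (p.1 : ℝ) + M * p.2 = alphaM R M}
      (fun p => tcoeff R p.1 p.2 * x ^ p.1 * y ^ p.2) p

/-- The Hessian determinant of `f`. -/
def hessDet (f : ℝ → ℝ → ℝ) (x y : ℝ) : ℝ :=
  pderiv2 f 2 0 x y * pderiv2 f 0 2 x y - (pderiv2 f 1 1 x y) ^ 2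

/-- `F*(x,y) = (Σ_{(a,b) vertex of N(F)} x^{2a} y^{2b})^{1/2}`. -/
def vertexFn (F : ℝ → ℝ → ℝ) (x y : ℝ) : ℝ :=
  Real.sqrt (∑' p : ℕ × ℕ,
    Set.indicator
      {p : ℕ × ℕ | ((p.1 : ℝ), (p.2 : ℝ)) ∈ (newtonPolygon F).extremePoints ℝ}
      (fun p => x ^ (2 * p.1) * y ^ (2 * p.2)) p)


/-- Taylor's inequality at the origin for a smooth function on a symmetric interval. -/
theorem abs_sub_taylor_le (n : ℕ) : ∀ (f : ℝ → ℝ) (C ρ : ℝ),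
    ContDiffOn ℝ (⊤ : ℕ∞) f (Ioo (-ρ) ρ) →
    (∀ t ∈ Ioo (-ρ) ρ, |iteratedDeriv n f t| ≤ C) → ∀ y ∈ Ioo (-ρ) ρ,
    |f y - ∑ k ∈ Finset.range n, iteratedDeriv k f 0 / (k.factorial : ℝ) * y ^ k|
      ≤ C * |y| ^ n := by
  induction n with
  | zero =>
    intro f C ρ _ hC y hy
    simpa using hC y hy
  | succ n ih =>
    intro f C ρ hf hC y hy
    have hC0 : 0 ≤ C := (abs_nonneg _).trans (hC y hy)
    obtain ⟨hfd, hf'⟩ := (contDiffOn_infty_iff_deriv_of_isOpen isOpen_Ioo).1 hf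
    have hderiv := ih (deriv f) C ρ hf' (fun t ht => by
      rw [← iteratedDeriv_succ']; exact hC t ht)
    have hsub : ∀ t ∈ Icc (-|y|) |y|, t ∈ Ioo (-ρ) ρ := by
      intro t ht
      have h : |y| < ρ := abs_lt.2 hy
      exact ⟨by linarith [ht.1], by linarith [ht.2]⟩
    have hmean := Convex.norm_image_sub_le_of_norm_hasDerivWithin_le
      (f := fun t => f t -
        ∑ k ∈ Finset.range (n + 1), iteratedDeriv k f 0 / (k.factorial : ℝ) * t ^ k)
      (f' := fun t => deriv f t -
        ∑ k ∈ Finset.range n, iteratedDeriv k (deriv f) 0 / (k.factorial : ℝ) * t ^ k)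
      (s := Icc (-|y|) |y|) (x := 0) (y := y) (C := C * |y| ^ n)
      (fun t ht => by
        have h1 := (hfd.differentiableAt (isOpen_Ioo.mem_nhds (hsub t ht))).hasDerivAt
        refine HasDerivAt.hasDerivWithinAt (h1.sub ?_)
        have h2 : HasDerivAt (fun t : ℝ => ∑ k ∈ Finset.range (n + 1),
            iteratedDeriv k f 0 / (k.factorial : ℝ) * t ^ k)
            (∑ k ∈ Finset.range (n + 1),
              iteratedDeriv k f 0 / (k.factorial : ℝ) * (k * t ^ (k - 1))) t :=
          HasDerivAt.fun_sum fun k _ => (hasDerivAt_pow k t).const_mul _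
        refine h2.congr_deriv ?_
        rw [Finset.sum_range_succ']
        simp only [Nat.cast_zero, zero_mul, mul_zero, add_zero, Nat.add_sub_cancel]
        refine Finset.sum_congr rfl fun k _ => ?_
        rw [← iteratedDeriv_succ', Nat.factorial_succ]
        have : (k.factorial : ℝ) ≠ 0 := by positivity
        push_cast
        field_simp)
      (fun t ht => by
        refine (hderiv t (hsub t ht)).trans ?_
        have : |t| ≤ |y| := abs_le.2 ht
        gcongr)
      (convex_Icc _ _) (by simp) ⟨neg_abs_le y, le_abs_self y⟩
    have hzero : ∑ k ∈ Finset.range (n + 1),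
        iteratedDeriv k f 0 / (k.factorial : ℝ) * (0 : ℝ) ^ k = f 0 := by
      rw [Finset.sum_range_succ']
      simp
    simp only [hzero, sub_self, sub_zero, Real.norm_eq_abs] at hmean
    rwa [pow_succ, ← mul_assoc]

theorem contDiffOn_iteratedDeriv_of_isOpen {s : Set ℝ} (hs : IsOpen s) {f : ℝ → ℝ}
    (hf : ContDiffOn ℝ (⊤ : ℕ∞) f s) (n : ℕ) :
    ContDiffOn ℝ (⊤ : ℕ∞) (iteratedDeriv n f) s := by
  induction n with
  | zero => simpa using hf
  | succ n ih =>
    rw [iteratedDeriv_succ]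
    exact ((contDiffOn_infty_iff_deriv_of_isOpen hs).1 ih).2

/-- Taylor's formula at the origin with a big-O remainder. -/
theorem sub_taylor_isBigO {f : ℝ → ℝ} {ρ : ℝ} (hρ : 0 < ρ)
    (hf : ContDiffOn ℝ (⊤ : ℕ∞) f (Ioo (-ρ) ρ)) (n : ℕ) :
    (fun x => f x - ∑ k ∈ Finset.range n, iteratedDeriv k f 0 / (k.factorial : ℝ) * x ^ k)
      =O[𝓝 0] fun x => |x| ^ n := by
  have hcont : ContinuousAt (iteratedDeriv n f) 0 :=
    (contDiffOn_iteratedDeriv_of_isOpen isOpen_Ioo hf n).continuousOn.continuousAt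
      (Ioo_mem_nhds (by linarith) hρ)
  obtain ⟨η, hη, hball⟩ := Metric.eventually_nhds_iff_ball.1
    ((hcont.abs.eventually_lt_const (lt_add_one _)).and (Ioo_mem_nhds (neg_lt_zero.2 hρ) hρ))
  have hIoo : Metric.ball (0 : ℝ) η = Ioo (-η) η := by simp [Real.ball_eq_Ioo]
  rw [hIoo] at hball
  refine Asymptotics.IsBigO.of_bound (|iteratedDeriv n f 0| + 1) ?_
  filter_upwards [Ioo_mem_nhds (neg_lt_zero.2 hη) hη] with x hx
  have := abs_sub_taylor_le n f _ η (hf.mono fun t ht => (hball t ht).2)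
    (fun t ht => (hball t ht).1.le) x hx
  simpa using this

/-- The iterated partial derivatives in the second variable of a jointly smooth function are
jointly smooth. -/
theorem contDiffOn_iteratedDeriv_snd {R : ℝ → ℝ → ℝ} {V : Set (ℝ × ℝ)} (hV : IsOpen V)
    (hR : ContDiffOn ℝ (⊤ : ℕ∞) (fun p : ℝ × ℝ => R p.1 p.2) V) (b : ℕ) :
    ContDiffOn ℝ (⊤ : ℕ∞) (fun p : ℝ × ℝ => iteratedDeriv b (R p.1) p.2) V := by
  induction b with
  | zero => simpa using hR
  | succ b ih =>
    have h := (ih.fderiv_of_isOpen (m := (⊤ : ℕ∞)) hV (by simp)).clm_apply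
      (contDiffOn_const (c := ((0 : ℝ), (1 : ℝ))))
    refine h.congr fun p hp => ?_
    have hd := ((ih.contDiffAt (hV.mem_nhds hp)).differentiableAt (by simp)).hasFDerivAt
    have hline : HasDerivAt (fun t : ℝ => (p.1, t)) ((0 : ℝ), (1 : ℝ)) p.2 :=
      (hasDerivAt_const _ _).prodMk (hasDerivAt_id _)
    rw [iteratedDeriv_succ]
    exact (HasFDerivAt.comp_hasDerivAt (f := fun t : ℝ => (p.1, t)) p.2 hd hline).deriv

/-- Two-variable Taylor formula at the origin, truncated on a rectangle of exponents. -/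
theorem sub_taylor_two_isBigO {R : ℝ → ℝ → ℝ} {U : Set (ℝ × ℝ)}
    (hU : U ∈ 𝓝 ((0 : ℝ), (0 : ℝ)))
    (hR : ContDiffOn ℝ (⊤ : ℕ∞) (fun p : ℝ × ℝ => R p.1 p.2) U) (A B : ℕ) :
    (fun p : ℝ × ℝ => R p.1 p.2 -
      ∑ q ∈ Finset.range A ×ˢ Finset.range B, tcoeff R q.1 q.2 * p.1 ^ q.1 * p.2 ^ q.2)
      =O[𝓝 (0, 0)] fun p => |p.1| ^ A + |p.2| ^ B := by
  have hV : IsOpen (interior U) := isOpen_interior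
  have hsm := contDiffOn_iteratedDeriv_snd hV (hR.mono interior_subset)
  have hV0 : interior U ∈ 𝓝 ((0 : ℝ), (0 : ℝ)) := interior_mem_nhds.2 hU
  have hcont : ContinuousAt (fun p : ℝ × ℝ => iteratedDeriv B (R p.1) p.2) (0, 0) :=
    (hsm B).continuousOn.continuousAt hV0
  obtain ⟨ρ, hρ, hball⟩ := Metric.eventually_nhds_iff_ball.1
    ((hcont.abs.eventually_lt_const (lt_add_one _)).and hV0)
  have hbox : ∀ x ∈ Ioo (-ρ) ρ, ∀ y ∈ Ioo (-ρ) ρ,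
      (x, y) ∈ Metric.ball ((0 : ℝ), (0 : ℝ)) ρ := by
    intro x hx y hy
    simp only [Metric.mem_ball, Prod.dist_eq, Real.dist_eq, sub_zero]
    exact max_lt (abs_lt.2 hx) (abs_lt.2 hy)
  have hI : Ioo (-ρ) ρ ∈ 𝓝 (0 : ℝ) := Ioo_mem_nhds (neg_lt_zero.2 hρ) hρ
  have h0I : (0 : ℝ) ∈ Ioo (-ρ) ρ := mem_of_mem_nhds hI
  have hy : (fun p : ℝ × ℝ => R p.1 p.2 - ∑ b ∈ Finset.range B,
      iteratedDeriv b (R p.1) 0 / (b.factorial : ℝ) * p.2 ^ b)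
      =O[𝓝 (0, 0)] fun p => |p.1| ^ A + |p.2| ^ B := by
    refine Asymptotics.IsBigO.of_bound (|iteratedDeriv B (R 0) 0| + 1) ?_
    filter_upwards [prod_mem_nhds hI hI] with p hp
    have hslice : ContDiffOn ℝ (⊤ : ℕ∞) (R p.1) (Ioo (-ρ) ρ) :=
      (hR.mono interior_subset).comp (f := fun t : ℝ => (p.1, t))
        (contDiff_const.prodMk contDiff_id).contDiffOn
        (fun t ht => (hball _ (hbox p.1 hp.1 t ht)).2)
    have h := abs_sub_taylor_le B (R p.1) _ ρ hslice
      (fun t ht => (hball _ (hbox p.1 hp.1 t ht)).1.le) p.2 hp.2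
    have hnn : 0 ≤ |p.1| ^ A + |p.2| ^ B := by positivity
    rw [Real.norm_eq_abs, Real.norm_eq_abs, abs_of_nonneg hnn]
    refine h.trans ?_
    have : 0 ≤ |p.1| ^ A := by positivity
    gcongr
    linarith
  have hx : ∀ b ∈ Finset.range B, (fun p : ℝ × ℝ => (iteratedDeriv b (R p.1) 0 -
      ∑ a ∈ Finset.range A, pderiv2 R a b 0 0 / (a.factorial : ℝ) * p.1 ^ a) *
        (p.2 ^ b / (b.factorial : ℝ)))
      =O[𝓝 (0, 0)] fun p => |p.1| ^ A + |p.2| ^ B := by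
    intro b _
    have hslice : ContDiffOn ℝ (⊤ : ℕ∞) (fun x => iteratedDeriv b (R x) 0) (Ioo (-ρ) ρ) :=
      (hsm b).comp (f := fun t : ℝ => (t, (0 : ℝ)))
        (contDiff_id.prodMk contDiff_const).contDiffOn
        (fun t ht => (hball _ (hbox t ht 0 h0I)).2)
    have h1 := (sub_taylor_isBigO hρ hslice A).comp_tendsto
      (continuous_fst.tendsto ((0 : ℝ), (0 : ℝ)))
    have h2 : (fun p : ℝ × ℝ => p.2 ^ b / (b.factorial : ℝ))
        =O[𝓝 (0, 0)] fun _ => (1 : ℝ) :=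
      ((by fun_prop : Continuous fun p : ℝ × ℝ => p.2 ^ b / (b.factorial : ℝ)).tendsto
        (0, 0)).isBigO_one ℝ
    refine (h1.mul h2).trans (Asymptotics.IsBigO.of_bound 1 (Eventually.of_forall fun p => ?_))
    have hA : 0 ≤ |p.1| ^ A := by positivity
    have hB : 0 ≤ |p.2| ^ B := by positivity
    simp only [Function.comp_apply, mul_one, one_mul, Real.norm_eq_abs]
    rw [abs_of_nonneg hA, abs_of_nonneg (add_nonneg hA hB)]
    linarith
  refine (hy.add (Asymptotics.IsBigO.sum hx)).congr_left fun p => ?_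
  have hsum : ∑ q ∈ Finset.range A ×ˢ Finset.range B,
      tcoeff R q.1 q.2 * p.1 ^ q.1 * p.2 ^ q.2 = ∑ b ∈ Finset.range B,
      (∑ a ∈ Finset.range A, pderiv2 R a b 0 0 / (a.factorial : ℝ) * p.1 ^ a) *
        (p.2 ^ b / (b.factorial : ℝ)) := by
    rw [Finset.sum_product_right]
    refine Finset.sum_congr rfl fun b _ => ?_
    rw [Finset.sum_mul]
    refine Finset.sum_congr rfl fun a _ => ?_
    rw [tcoeff]
    field_simp
  rw [hsum, Finset.sum_apply]
  simp only [sub_mul, Finset.sum_sub_distrib]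
  have : ∀ b, iteratedDeriv b (R p.1) 0 / (b.factorial : ℝ) * p.2 ^ b =
    iteratedDeriv b (R p.1) 0 * (p.2 ^ b / (b.factorial : ℝ)) := fun b => by ring
  simp only [this, sub_add_sub_cancel]

theorem alphaM_le {R : ℝ → ℝ → ℝ} {M : ℝ} (hM : 0 < M) {p : ℕ × ℕ} (hp : p ∈ tsupp R) :
    alphaM R M ≤ (p.1 : ℝ) + M * p.2 := by
  refine csInf_le ⟨0, ?_⟩ ⟨p, hp, rfl⟩
  rintro t ⟨q, -, rfl⟩
  positivity

/-- `R_M` is a finite sum over any rectangle of exponents exceeding the weighted degree. -/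
theorem RMpart_eq_sum {R : ℝ → ℝ → ℝ} {M : ℝ} (hM : 0 < M) {A B : ℕ}
    (hA : alphaM R M < A) (hB : alphaM R M < M * B) (x y : ℝ) :
    RMpart R M x y = ∑ p ∈ Finset.range A ×ˢ Finset.range B,
      Set.indicator {p : ℕ × ℕ | p ∈ tsupp R ∧ (p.1 : ℝ) + M * p.2 = alphaM R M}
        (fun p => tcoeff R p.1 p.2 * x ^ p.1 * y ^ p.2) p := by
  refine tsum_eq_sum fun p hp => Set.indicator_of_notMem (fun hmem => hp ?_) _
  obtain ⟨-, hdeg⟩ := hmem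
  have h1 : 0 ≤ M * (p.2 : ℝ) := by positivity
  have h2 : (p.1 : ℝ) < A := by linarith
  have h3 : (p.2 : ℝ) < B := by
    refine lt_of_mul_lt_mul_left ?_ hM.le
    linarith [Nat.cast_nonneg (α := ℝ) p.1]
  rw [Finset.mem_product, Finset.mem_range, Finset.mem_range]
  exact ⟨by exact_mod_cast h2, by exact_mod_cast h3⟩

/-- On the region `|y| ≤ K x ^ M`, a Taylor term of `R - R_M` has weighted degree above `α`. -/
theorem abs_term_sub_indicator_le {R : ℝ → ℝ → ℝ} {M K x y : ℝ} (hM : 0 < M) (hx : 0 < x)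
    (hy : |y| ≤ K * x ^ M) (p : ℕ × ℕ) :
    |tcoeff R p.1 p.2 * x ^ p.1 * y ^ p.2 -
      Set.indicator {p : ℕ × ℕ | p ∈ tsupp R ∧ (p.1 : ℝ) + M * p.2 = alphaM R M}
        (fun p => tcoeff R p.1 p.2 * x ^ p.1 * y ^ p.2) p| ≤
    (if alphaM R M < (p.1 : ℝ) + M * p.2 then
      |tcoeff R p.1 p.2| * K ^ p.2 * x ^ ((p.1 : ℝ) + M * p.2 - alphaM R M) else 0) *
      x ^ alphaM R M := by
  by_cases hp : p ∈ tsupp R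
  · rcases (alphaM_le hM hp).eq_or_lt with heq | hlt
    · simp [Set.indicator, hp, ← heq]
    · rw [Set.indicator_of_notMem (fun h => hlt.ne' h.2), if_pos hlt, sub_zero,
        mul_assoc _ (x ^ (_ : ℝ)),
        ← Real.rpow_add hx, sub_add_cancel, Real.rpow_add hx, Real.rpow_natCast,
        Real.rpow_mul hx.le, Real.rpow_natCast, abs_mul, abs_mul, abs_pow, abs_pow,
        abs_of_pos hx]
      calc |tcoeff R p.1 p.2| * x ^ p.1 * |y| ^ p.2
          ≤ |tcoeff R p.1 p.2| * x ^ p.1 * (K * x ^ M) ^ p.2 := by gcongr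
        _ = _ := by rw [mul_pow]; ring
  · have hc : tcoeff R p.1 p.2 = 0 := by simpa [tsupp] using hp
    rw [Set.indicator_of_notMem (fun h => hp h.1), hc]
    simp

/-- Lemma 2.3: on the sliver `0 < x < δ`, `(r-δ)x^M < y < (r+δ)x^M`, the difference
`|R - R_M|` is at most `ε x^α` where `α = α_M(R)`. -/
theorem stmt_4 (R : ℝ → ℝ → ℝ) (U₀ : Set (ℝ × ℝ)) (hU₀ : U₀ ∈ 𝓝 ((0 : ℝ), (0 : ℝ)))
    (hsm : ContDiffOn ℝ (⊤ : ℕ∞) (fun p : ℝ × ℝ => R p.1 p.2) U₀)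
    (h0 : R 0 0 = 0) (hts : (tsupp R).Nonempty)
    (M : ℝ) (hM : 0 < M) :
    ∀ r : ℝ, ∀ ε > (0 : ℝ), ∃ δ > (0 : ℝ), ∀ x y : ℝ,
      0 < x → x < δ → (r - δ) * x ^ M < y → y < (r + δ) * x ^ M →
      |R x y - RMpart R M x y| < ε * x ^ alphaM R M := by
  intro r ε hε
  set α := alphaM R M with hα
  obtain ⟨A, hA⟩ := exists_nat_gt α
  obtain ⟨B, hB⟩ := exists_nat_gt (α / M)
  replace hB : α < M * B := by rwa [div_lt_iff₀' hM] at hB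
  set K := |r| + 1
  obtain ⟨C, hCpos, hC⟩ := (sub_taylor_two_isBigO hU₀ hsm A B).exists_pos
  obtain ⟨ρ, hρ, hball⟩ := Metric.eventually_nhds_iff_ball.1 hC.bound
  have hpow : ∀ γ : ℝ, 0 < γ → Tendsto (fun x : ℝ => x ^ γ) (𝓝 0) (𝓝 0) := fun γ hγ => by
    simpa [Real.zero_rpow hγ.ne'] using (Real.continuousAt_rpow_const 0 γ (Or.inr hγ.le)).tendsto
  have hrem : Tendsto (fun x : ℝ => C * (x ^ ((A : ℝ) - α) + K ^ B * x ^ (M * B - α)) +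
      ∑ p ∈ Finset.range A ×ˢ Finset.range B, if α < (p.1 : ℝ) + M * p.2 then
        |tcoeff R p.1 p.2| * K ^ p.2 * x ^ ((p.1 : ℝ) + M * p.2 - α) else 0) (𝓝 0) (𝓝 0) := by
    have h1 := ((hpow _ (sub_pos.2 hA)).add ((hpow _ (sub_pos.2 hB)).const_mul (K ^ B))).const_mul C
    have h2 := tendsto_finsetSum (Finset.range A ×ˢ Finset.range B)
      (f := fun (p : ℕ × ℕ) (x : ℝ) => if α < (p.1 : ℝ) + M * p.2 then
        |tcoeff R p.1 p.2| * K ^ p.2 * x ^ ((p.1 : ℝ) + M * p.2 - α) else 0)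
      (a := fun _ => 0) (x := 𝓝 0) (fun p _ => by
        by_cases hp : α < (p.1 : ℝ) + M * p.2
        · simpa only [if_pos hp, mul_zero] using (hpow _ (sub_pos.2 hp)).const_mul
            (|tcoeff R p.1 p.2| * K ^ p.2)
        · simpa only [if_neg hp] using tendsto_const_nhds)
    simpa using h1.add h2
  have hKx : Tendsto (fun x : ℝ => K * x ^ M) (𝓝 0) (𝓝 0) := by
    simpa using (hpow M hM).const_mul K
  obtain ⟨δ, hδ, hsmall⟩ := Metric.eventually_nhds_iff_ball.1
    ((hrem.eventually_lt_const hε).and (hKx.eventually_lt_const hρ))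
  refine ⟨min (min δ ρ) 1, by positivity, fun x y hx hxlt hy1 hy2 => ?_⟩
  have hδ1 : min (min δ ρ) 1 ≤ 1 := min_le_right _ _
  have hxδ : x < δ := hxlt.trans_le ((min_le_left _ _).trans (min_le_left _ _))
  have hxρ : x < ρ := hxlt.trans_le ((min_le_left _ _).trans (min_le_right _ _))
  have hxM : 0 < x ^ M := Real.rpow_pos_of_pos hx M
  have hxα : 0 < x ^ α := Real.rpow_pos_of_pos hx α
  have hyK : |y| ≤ K * x ^ M := by
    rw [abs_le, ← neg_mul]
    refine ⟨le_trans ?_ hy1.le, hy2.le.trans ?_⟩ <;> gcongr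
    · linarith [neg_abs_le r]
    · linarith [le_abs_self r]
  obtain ⟨hε', hKρ⟩ := hsmall x (by rwa [Metric.mem_ball, Real.dist_eq, sub_zero, abs_of_pos hx])
  have hRem := hball (x, y) (by
    simp only [Metric.mem_ball, Prod.dist_eq, Real.dist_eq, sub_zero]
    exact max_lt (by rwa [abs_of_pos hx]) (hyK.trans_lt hKρ))
  have hnn : 0 ≤ |x| ^ A + |y| ^ B := by positivity
  simp only [Real.norm_eq_abs, abs_of_nonneg hnn] at hRem
  have hpowB : |y| ^ B ≤ K ^ B * x ^ (M * B - α) * x ^ α := by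
    rw [mul_assoc, ← Real.rpow_add hx, sub_add_cancel, Real.rpow_mul hx.le, Real.rpow_natCast,
      ← mul_pow]
    gcongr
  have hpowA : |x| ^ A = x ^ ((A : ℝ) - α) * x ^ α := by
    rw [← Real.rpow_add hx, sub_add_cancel, Real.rpow_natCast, abs_of_pos hx]
  have hterms := (Finset.abs_sum_le_sum_abs _ _).trans
    (Finset.sum_le_sum fun p (_ : p ∈ Finset.range A ×ˢ Finset.range B) =>
      abs_term_sub_indicator_le (R := R) hM hx hyK p)
  rw [Finset.sum_sub_distrib, ← RMpart_eq_sum hM hA hB, ← Finset.sum_mul, ← hα] at hterms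
  calc |R x y - RMpart R M x y|
      ≤ C * (|x| ^ A + |y| ^ B) + _ := (abs_sub_le _ _ _).trans (add_le_add hRem hterms)
    _ ≤ C * (x ^ ((A : ℝ) - α) * x ^ α + K ^ B * x ^ (M * B - α) * x ^ α) + _ := by
      rw [hpowA]
      gcongr
    _ = _ * x ^ α := by rw [← add_mul, ← mul_assoc, ← add_mul]
    _ < ε * x ^ α := mul_lt_mul_of_pos_right hε' hxα

end
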